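/- arXiv:1112.3936 — 2 statements merged into one kernel-verified Lean document; each statement's English description precedes it below -/
import Mathlib

section
/- There exist no spacelike null-homotopic closed curves in the pseudosphere: if α : 𝕊¹ → 𝕊²₁ is a closed spacelike C¹ curve, then α is not homotopic within 𝕊²₁ to a constant map. Equivalently, π ∘ α : 𝕊¹ → C is surjective and not null-homotopic in C. -/
/-!
There exist no spacelike null-homotopic closed curves in the pseudosphere:
a closed spacelike C¹ curve α on 𝕊²₁ (modelled as a T-periodic spacelike C¹
curve) is not homotopic within 𝕊²₁ to a constant; equivalently π ∘ α is
surjective onto the waist C and not null-homotopic in C.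
-/

/-- The Lorentzian inner product on ℝ³. -/
def lorentz (x y : Fin 3 → ℝ) : ℝ := x 0 * y 0 + x 1 * y 1 - x 2 * y 2

/-- The timelike vector a = (0,0,1). -/
def aVec : Fin 3 → ℝ := ![0, 0, 1]

/-- The unit pseudosphere (de Sitter surface) 𝕊²₁. -/
def pseudoSphere : Set (Fin 3 → ℝ) := {x | lorentz x x = 1}

/-- The waist C of the pseudosphere: the unit circle in the plane x₃ = 0. -/
def waist : Set (Fin 3 → ℝ) := {x | lorentz x x = 1 ∧ x 2 = 0}

/-- Geodesic projection π(p) = (p + ⟨p,a⟩a)/√(1 + ⟨p,a⟩²). -/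
noncomputable def piProj (p : Fin 3 → ℝ) : Fin 3 → ℝ :=
  (1 / Real.sqrt (1 + (lorentz p aVec) ^ 2)) • (p + (lorentz p aVec) • aVec)

/-!
Identify the waist with the unit circle of `ℂ` by forgetting the third coordinate. If a closed curve
`α` projected to a null-homotopic loop in the waist, that loop would have a continuous real angle on
the circle `ℝ / Tℤ`, hence a periodic angle `θ` on `ℝ`, and `θ' = 0` somewhere by Rolle's theorem.
But differentiating `⟨α, α⟩ = 1` gives `⟨α, α'⟩ = 0`, and Lagrange's identity then yields
`(α₁ α₂' - α₂ α₁')² = α₁'² + α₂'² + α₃² ⟨α', α'⟩`,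
so the angular velocity never vanishes. Surjectivity follows because a map to the circle that misses
a point has a continuous angle.
-/

open ContractibleSpace Real Topology

section CircleLifts

variable {X : Type*} [TopologicalSpace X]

theorem nullhomotopic_circle_iff_exists_lift {F : C(X, Circle)} :
    F.Nullhomotopic ↔ ∃ G : C(X, ℝ), ∀ x, Circle.exp (G x) = F x := by
  constructor
  · rintro ⟨y, ⟨H⟩⟩
    obtain ⟨e, rfl⟩ := Circle.exp_surjective y
    have lifts_start (x : X) :
        H.symm.toContinuousMap (0, x) = Circle.exp (ContinuousMap.const X e x) := by simp
    let G := Circle.isCoveringMap_exp.liftHomotopy H.symm.toContinuousMap _ lifts_start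
    refine ⟨G.comp ⟨fun x ↦ (1, x), by fun_prop⟩, fun x ↦ ?_⟩
    have lifts_end := Circle.isCoveringMap_exp.liftHomotopy_lifts _ _ lifts_start
    exact (congrFun lifts_end (1, x)).trans (H.symm.apply_one x)
  · rintro ⟨G, hG⟩
    have hF : F = Circle.exp.comp G := ContinuousMap.ext fun x ↦ (hG x).symm
    exact hF ▸ ((id_nullhomotopic ℝ).comp_left G).comp_right Circle.exp

theorem surjective_of_not_nullhomotopic_circle {F : C(X, Circle)} (hF : ¬ F.Nullhomotopic) :
    Function.Surjective F := by
  by_contra hsurj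
  obtain ⟨y, hy⟩ := not_forall.1 hsurj
  -- Division by `exp c` rotates the missed value `y` to `exp π = -1`, where `arg` jumps.
  obtain ⟨c, hc⟩ := Circle.exp_surjective (y / Circle.exp π)
  let w : C(X, Circle) := ⟨fun x ↦ F x / Circle.exp c, by fun_prop⟩
  have hslit (x : X) : (w x : ℂ) ∈ Complex.slitPlane := by
    refine Complex.mem_slitPlane_iff_arg.2 ⟨fun harg ↦ hy ⟨x, ?_⟩, Circle.coe_ne_zero _⟩
    calc F x = w x * Circle.exp c := (div_mul_cancel _ _).symm
      _ = Circle.exp π * (y / Circle.exp π) := by rw [hc, ← harg, Circle.exp_arg]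
      _ = y := mul_div_cancel _ _
  have hcont : Continuous fun x ↦ c + (w x : ℂ).arg :=
    continuous_const.add <| continuous_iff_continuousAt.2 fun x ↦
      (Complex.continuousAt_arg (hslit x)).comp (f := fun x ↦ (w x : ℂ)) (by fun_prop)
  refine hF (nullhomotopic_circle_iff_exists_lift.2 ⟨⟨_, hcont⟩, fun x ↦ ?_⟩)
  simp only [ContinuousMap.coe_mk, Circle.exp_add, Circle.exp_arg]
  exact mul_div_cancel _ _

end CircleLifts

section ClosedCurves

theorem exists_loop_of_periodic {Y : Type*} [TopologicalSpace Y] {S : Set Y} {α : ℝ → Y} {T : ℝ}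
    (hper : Function.Periodic α T) (hα : Continuous α) (hS : ∀ s, α s ∈ S) :
    ∃ β : C(AddCircle T, S), ∀ s : ℝ, (β (s : AddCircle T) : Y) = α s := by
  let γ : ℝ → S := fun s ↦ ⟨α s, hS s⟩
  have hγ_per : Function.Periodic γ T := fun s ↦ Subtype.ext (hper s)
  have hγ_cont : Continuous γ := hα.subtype_mk hS
  exact ⟨⟨hγ_per.lift, continuous_quot_lift _ hγ_cont⟩, fun s ↦ rfl⟩

theorem hasDerivAt_angle {z : ℝ → ℂ} {z' : ℂ} {θ : ℝ → ℝ} {s : ℝ} (hz : HasDerivAt z z' s)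
    (hzs : z s ≠ 0) (hθ : ContinuousAt θ s)
    (hpolar : ∀ᶠ t in 𝓝 s, z t = ‖z t‖ * Circle.exp (θ t)) :
    HasDerivAt θ (z' / z s).im s := by
  have hlog : HasDerivAt (fun t ↦ θ s + (Complex.log (z t / z s)).im) (z' / z s).im s := by
    have h := (hz.div_const (z s)).clog_real (by simp [hzs])
    simpa [hzs] using (Complex.imCLM.hasFDerivAt.comp_hasDerivAt s h).const_add (θ s)
  refine hlog.congr_of_eventuallyEq ?_
  have hsmall : ∀ᶠ t in 𝓝 s, |θ t - θ s| < π := by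
    simpa [Real.dist_eq] using hθ.eventually (Metric.ball_mem_nhds (θ s) Real.pi_pos)
  filter_upwards [hpolar, hsmall, hz.continuousAt.eventually_ne hzs] with t hpt hsmall hzt
  have hquot : z t / z s = ↑(‖z t‖ / ‖z s‖) * Circle.exp (θ t - θ s) := by
    conv_lhs => rw [hpt, hpolar.self_of_nhds, mul_div_mul_comm]
    push_cast [Circle.exp_sub, Circle.coe_div]
    rfl
  have hpos : 0 < ‖z t‖ / ‖z s‖ := by positivity
  obtain ⟨hlo, hhi⟩ := abs_lt.1 hsmall
  rw [Complex.log_im, hquot, Complex.arg_real_mul _ hpos, Circle.arg_exp hlo hhi.le]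
  ring

theorem not_nullhomotopic_of_angularVelocity_ne_zero {T : ℝ} (hT : 0 < T) {z z' : ℝ → ℂ}
    (hz : ∀ s, HasDerivAt z (z' s) s) (hω : ∀ s, (z' s / z s).im ≠ 0)
    {F : C(AddCircle T, Circle)} (hF : ∀ s : ℝ, z s = ‖z s‖ * F (s : AddCircle T)) :
    ¬ F.Nullhomotopic := by
  intro hnull
  obtain ⟨G, hG⟩ := nullhomotopic_circle_iff_exists_lift.1 hnull
  let θ : ℝ → ℝ := fun s ↦ G (s : AddCircle T)
  have hθ_cont : Continuous θ := G.continuous.comp (AddCircle.continuous_mk' T)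
  have hz_ne (s : ℝ) : z s ≠ 0 := fun h ↦ hω s (by simp [h])
  have hθ_deriv (s : ℝ) : HasDerivAt θ (z' s / z s).im s :=
    hasDerivAt_angle (hz s) (hz_ne s) hθ_cont.continuousAt
      (.of_forall fun t ↦ by simpa only [θ, hG] using hF t)
  have hθ_period : θ 0 = θ T := congrArg G (AddCircle.coe_period T).symm
  obtain ⟨s, -, hs⟩ := exists_hasDerivAt_eq_zero hT hθ_cont.continuousOn hθ_period
    fun s _ ↦ hθ_deriv s
  exact hω s hs

end ClosedCurves

section LorentzGeometry

theorem hasDerivAt_lorentz {α β : ℝ → Fin 3 → ℝ} {α' β' : Fin 3 → ℝ} {s : ℝ}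
    (hα : HasDerivAt α α' s) (hβ : HasDerivAt β β' s) :
    HasDerivAt (fun t ↦ lorentz (α t) (β t)) (lorentz α' (β s) + lorentz (α s) β') s := by
  have hmul (i : Fin 3) := (hasDerivAt_pi.1 hα i).mul (hasDerivAt_pi.1 hβ i)
  refine (((hmul 0).add (hmul 1)).sub (hmul 2)).congr_deriv ?_
  simp only [lorentz]
  ring

theorem lorentz_comm (x y : Fin 3 → ℝ) : lorentz x y = lorentz y x := by
  simp only [lorentz, mul_comm]

theorem lorentz_eq_zero_of_lorentz_self_const {α : ℝ → Fin 3 → ℝ} {v : Fin 3 → ℝ} {s c : ℝ}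
    (hα : HasDerivAt α v s) (hc : ∀ᶠ t in 𝓝 s, lorentz (α t) (α t) = c) :
    lorentz (α s) v = 0 := by
  have hconst : HasDerivAt (fun t ↦ lorentz (α t) (α t)) 0 s :=
    (hasDerivAt_const s c).congr_of_eventuallyEq hc
  have hsum := (hasDerivAt_lorentz hα hα).unique hconst
  rw [lorentz_comm v] at hsum
  linarith

theorem sq_horizontal_area_eq {p v : Fin 3 → ℝ} (hp : p ∈ pseudoSphere) (hv : lorentz p v = 0) :
    (p 0 * v 1 - p 1 * v 0) ^ 2 = v 0 ^ 2 + v 1 ^ 2 + p 2 ^ 2 * lorentz v v := by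
  have hp : lorentz p p = 1 := hp
  simp only [lorentz] at *
  linear_combination (v 0 ^ 2 + v 1 ^ 2) * hp - (p 0 * v 0 + p 1 * v 1 + p 2 * v 2) * hv

theorem horizontal_area_ne_zero {p v : Fin 3 → ℝ} (hp : p ∈ pseudoSphere) (hpv : lorentz p v = 0)
    (hv : 0 ≤ lorentz v v) (hv_ne : v ≠ 0) : p 0 * v 1 - p 1 * v 0 ≠ 0 := by
  intro harea
  have hsum : v 0 ^ 2 + v 1 ^ 2 + p 2 ^ 2 * lorentz v v = 0 := by
    rw [← sq_horizontal_area_eq hp hpv, harea, zero_pow two_ne_zero]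
  have hp2 : 0 ≤ p 2 ^ 2 * lorentz v v := by positivity
  have h0 : v 0 = 0 := by nlinarith
  have h1 : v 1 = 0 := by nlinarith
  have h2 : v 2 = 0 := by
    simp only [lorentz, h0, h1] at hv
    nlinarith [sq_nonneg (v 2)]
  exact hv_ne (funext fun i ↦ by fin_cases i <;> assumption)

/-- The orthogonal projection of `𝕃³` along the timelike vector `a`, with its image identified with
`ℂ` so that angles in the waist become arguments of complex numbers. -/
noncomputable def horizontal : (Fin 3 → ℝ) →L[ℝ] ℂ :=
  Complex.equivRealProdCLM.symm.toContinuousLinearMap.comp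
    ((ContinuousLinearMap.proj 0).prod (ContinuousLinearMap.proj 1))

@[simp] theorem horizontal_re (p : Fin 3 → ℝ) : (horizontal p).re = p 0 := by simp [horizontal]

@[simp] theorem horizontal_im (p : Fin 3 → ℝ) : (horizontal p).im = p 1 := by simp [horizontal]

theorem norm_horizontal {p : Fin 3 → ℝ} (hp : p ∈ pseudoSphere) :
    ‖horizontal p‖ = √(1 + p 2 ^ 2) := by
  have hp : lorentz p p = 1 := hp
  rw [Complex.norm_eq_sqrt_sq_add_sq, horizontal_re, horizontal_im]
  congr 1
  simp only [lorentz] at hp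
  linarith

theorem im_horizontal_div_ne_zero {p v : Fin 3 → ℝ} (hp : p ∈ pseudoSphere)
    (hpv : lorentz p v = 0) (hv : 0 ≤ lorentz v v) (hv_ne : v ≠ 0) :
    (horizontal v / horizontal p).im ≠ 0 := by
  have hp_ne : horizontal p ≠ 0 := by
    rw [← norm_ne_zero_iff, norm_horizontal hp]
    positivity
  have him : (horizontal v / horizontal p).im =
      (p 0 * v 1 - p 1 * v 0) / Complex.normSq (horizontal p) := by
    rw [Complex.div_im, horizontal_re, horizontal_re, horizontal_im, horizontal_im]
    ring
  rw [him]
  exact div_ne_zero (horizontal_area_ne_zero hp hpv hv hv_ne) (Complex.normSq_pos.2 hp_ne).ne'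

end LorentzGeometry

section Projection

theorem lorentz_aVec (p : Fin 3 → ℝ) : lorentz p aVec = -p 2 := by simp [lorentz, aVec]

theorem piProj_eq_smul (p : Fin 3 → ℝ) : piProj p = (√(1 + p 2 ^ 2))⁻¹ • ![p 0, p 1, 0] := by
  ext i
  fin_cases i <;> simp [piProj, lorentz_aVec] <;> simp [aVec]

theorem continuous_piProj : Continuous piProj := by
  have hsqrt : Continuous fun p : Fin 3 → ℝ ↦ √(1 + (-p 2) ^ 2) := by fun_prop
  unfold piProj
  simp only [lorentz_aVec]
  exact (continuous_const.div hsqrt fun p ↦ by positivity).smul (by fun_prop)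

theorem piProj_mem_waist {p : Fin 3 → ℝ} (hp : p ∈ pseudoSphere) : piProj p ∈ waist := by
  have hp : lorentz p p = 1 := hp
  have hsq : √(1 + p 2 ^ 2) ^ 2 = 1 + p 2 ^ 2 := Real.sq_sqrt (by positivity)
  refine ⟨?_, by simp [piProj_eq_smul]⟩
  simp only [lorentz] at hp
  simp only [piProj_eq_smul, lorentz, Pi.smul_apply, Matrix.cons_val, smul_eq_mul]
  field_simp
  linarith

theorem horizontal_eq_norm_mul_piProj {p : Fin 3 → ℝ} (hp : p ∈ pseudoSphere) :
    horizontal p = ‖horizontal p‖ * horizontal (piProj p) := by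
  have hsqrt : √(1 + p 2 ^ 2) ≠ 0 := by positivity
  rw [norm_horizontal hp, piProj_eq_smul]
  apply Complex.ext <;> simp [hsqrt]

/-- The geodesic projection `π` as a continuous map from the pseudosphere onto the waist. -/
noncomputable def waistProj : C(pseudoSphere, waist) where
  toFun p := ⟨piProj p, piProj_mem_waist p.2⟩
  continuous_toFun := (continuous_piProj.comp continuous_subtype_val).subtype_mk _

/-- The waist `C` seen as the unit circle in `ℂ`. -/
noncomputable def waistToCircle : C(waist, Circle) where
  toFun q := ⟨horizontal q, by simp [Submonoid.unitSphere, norm_horizontal q.2.1, q.2.2]⟩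
  continuous_toFun := by fun_prop

theorem coe_waistToCircle (q : waist) : (waistToCircle q : ℂ) = horizontal q := rfl

theorem waistToCircle_injective : Function.Injective waistToCircle := by
  intro p q h
  have h : horizontal p = horizontal q := congrArg Subtype.val h
  ext i
  fin_cases i
  · simpa using congrArg Complex.re h
  · simpa using congrArg Complex.im h
  · exact p.2.2.trans q.2.2.symm

end Projection

theorem not_nullhomotopic_waistToCircle_comp {T : ℝ} (hT : 0 < T) {α α' : ℝ → Fin 3 → ℝ}
    (hα : ∀ s, HasDerivAt α (α' s) s) (hS : ∀ s, α s ∈ pseudoSphere)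
    (hnontimelike : ∀ s, 0 ≤ lorentz (α' s) (α' s)) (hreg : ∀ s, α' s ≠ 0)
    {ψ : C(AddCircle T, waist)}
    (hψ : ∀ s : ℝ, (ψ (s : AddCircle T) : Fin 3 → ℝ) = piProj (α s)) :
    ¬ (waistToCircle.comp ψ).Nullhomotopic := by
  refine not_nullhomotopic_of_angularVelocity_ne_zero hT
    (z := fun s ↦ horizontal (α s)) (z' := fun s ↦ horizontal (α' s)) ?_ ?_ ?_
  · exact fun s ↦ horizontal.hasFDerivAt.comp_hasDerivAt s (hα s)
  · intro s
    have horth := lorentz_eq_zero_of_lorentz_self_const (hα s) (.of_forall hS)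
    exact im_horizontal_div_ne_zero (hS s) horth (hnontimelike s) (hreg s)
  · intro s
    rw [ContinuousMap.comp_apply, coe_waistToCircle, hψ]
    exact horizontal_eq_norm_mul_piProj (hS s)

theorem stmt_6_general (T : ℝ) (hT : 0 < T) (α α' : ℝ → Fin 3 → ℝ)
    (hper : Function.Periodic α T) (hα : ∀ s, HasDerivAt α (α' s) s)
    (hS : ∀ s : ℝ, α s ∈ pseudoSphere)
    (hnontimelike : ∀ s, 0 ≤ lorentz (α' s) (α' s)) (hreg : ∀ s, α' s ≠ 0) :
    (∀ β : C(AddCircle T, pseudoSphere),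
       (∀ s : ℝ, (β (s : AddCircle T) : Fin 3 → ℝ) = α s) → ¬ β.Nullhomotopic) ∧
    (∀ q ∈ waist, ∃ s : ℝ, piProj (α s) = q) ∧
    (∀ ψ : C(AddCircle T, waist),
       (∀ s : ℝ, (ψ (s : AddCircle T) : Fin 3 → ℝ) = piProj (α s)) →
       ¬ ψ.Nullhomotopic) := by
  have hwinds {ψ : C(AddCircle T, waist)} (hψ : ∀ s : ℝ, (ψ s : Fin 3 → ℝ) = piProj (α s)) :=
    not_nullhomotopic_waistToCircle_comp hT hα hS hnontimelike hreg hψ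
  refine ⟨fun β hβ hnull ↦ ?_, fun q hq ↦ ?_, fun ψ hψ hnull ↦ ?_⟩
  · have hψ (s : ℝ) : (waistProj.comp β s : Fin 3 → ℝ) = piProj (α s) := congrArg piProj (hβ s)
    exact hwinds hψ ((hnull.comp_right waistProj).comp_right waistToCircle)
  · obtain ⟨β, hβ⟩ := exists_loop_of_periodic hper
      (continuous_iff_continuousAt.2 fun s ↦ (hα s).continuousAt) hS
    have hψ (s : ℝ) : (waistProj.comp β s : Fin 3 → ℝ) = piProj (α s) := congrArg piProj (hβ s)
    obtain ⟨x, hx⟩ := surjective_of_not_nullhomotopic_circle (hwinds hψ) (waistToCircle ⟨q, hq⟩)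
    obtain ⟨s, rfl⟩ := QuotientAddGroup.mk_surjective x
    exact ⟨s, (hψ s).symm.trans (congrArg Subtype.val (waistToCircle_injective hx))⟩
  · exact hwinds hψ (hnull.comp_right waistToCircle)

theorem stmt_6 (T : ℝ) (hT : 0 < T) (α : ℝ → (Fin 3 → ℝ))
    (hper : Function.Periodic α T) (hα : ContDiff ℝ 1 α)
    (hS : ∀ s : ℝ, α s ∈ pseudoSphere)
    (hsp : ∀ s : ℝ, 0 < lorentz (deriv α s) (deriv α s)) :
    (∀ β : C(AddCircle T, pseudoSphere),
       (∀ s : ℝ, (β (s : AddCircle T) : Fin 3 → ℝ) = α s) → ¬ β.Nullhomotopic) ∧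
    (∀ q ∈ waist, ∃ s : ℝ, piProj (α s) = q) ∧
    (∀ ψ : C(AddCircle T, waist),
       (∀ s : ℝ, (ψ (s : AddCircle T) : Fin 3 → ℝ) = piProj (α s)) →
       ¬ ψ.Nullhomotopic) := by
  have hα' (s : ℝ) : HasDerivAt α (deriv α s) s :=
    (hα.differentiable one_ne_zero s).hasDerivAt
  have hreg (s : ℝ) : deriv α s ≠ 0 := fun h ↦ by simpa [h, lorentz] using hsp s
  exact stmt_6_general T hT α (deriv α) hper hα' hS (fun s ↦ (hsp s).le) hreg
end

section
/- A spacelike graph with nonvanishing mean curvature and zero boundary values lies on one side of the hyperplane: let n ≥ 2, let Ω ⊂ ℝⁿ be a bounded open connected set, and let u be a real-valued function that is C² on an open neighborhood of the closure of Ω, with |∇u(x)| < 1 for all x in the closure of Ω, and with u = 0 on the boundary ∂Ω. If the mean curvature expression div(∇u/√(1 − |∇u|²)) is nonzero at every point of Ω, then u does not change sign: either u(x) ≥ 0 for all x ∈ Ω, or u(x) ≤ 0 for all x ∈ Ω. (This is the graph formulation of the statement: a compact spacelike hypersurface in 𝕃ⁿ⁺¹ with nowhere vanishing mean curvature and boundary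 in a spacelike hyperplane P lies in one side of P.) -/
/-!
A spacelike graph with nowhere vanishing mean curvature and zero boundary
values lies on one side of the hyperplane: if u is C² near the closure of a
bounded open connected Ω ⊂ ℝⁿ (n ≥ 2), |∇u| < 1 on the closure, u = 0 on ∂Ω,
and div(∇u/√(1−|∇u|²)) ≠ 0 at every point of Ω, then u does not change sign.
-/

/-- The vector field ∇u/√(1 − |∇u|²) whose divergence is n times the mean
curvature of the spacelike graph of u in Lorentz–Minkowski space. -/
noncomputable def mcField {n : ℕ} (u : EuclideanSpace ℝ (Fin n) → ℝ)
    (x : EuclideanSpace ℝ (Fin n)) : EuclideanSpace ℝ (Fin n) :=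
  (1 / Real.sqrt (1 - ‖gradient u x‖ ^ 2)) • gradient u x

/-- The divergence of a vector field on ℝⁿ: the sum of the i-th partial
derivatives of the i-th components. -/
noncomputable def diverg {n : ℕ}
    (F : EuclideanSpace ℝ (Fin n) → EuclideanSpace ℝ (Fin n))
    (x : EuclideanSpace ℝ (Fin n)) : ℝ :=
  ∑ i : Fin n, fderiv ℝ F x (EuclideanSpace.single i 1) i

/-!
Along a line through a local maximum `p` of `u`, the flux `c • ∇u` with `0 ≤ c` vanishes at `p`, and
if its derivative were positive there then `u` would increase just after `p`; so
`div (c • ∇u) p ≤ 0`, and dually `0 ≤ div (c • ∇u) q` at a local minimum `q`. A function that takes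
values on both sides of its constant boundary value has an interior local maximum and an interior
local minimum. If the flux is `C¹`, its divergence is continuous and hence vanishes somewhere on the
connected domain. The mean curvature is the case `c = 1 / √(1 - ‖∇u‖ ^ 2)`.
-/

open Filter Set Topology

section Line

variable {f c : ℝ → ℝ} {a : ℝ}

theorem not_isLocalMaxOn_Ioi_of_deriv_pos (hf : ContinuousWithinAt f (Ici a) a)
    (hpos : ∀ᶠ t in 𝓝[>] a, 0 < deriv f t) : ¬IsLocalMaxOn f (Ioi a) a := by
  intro hmax
  have hle : ∀ᶠ t in 𝓝[>] a, f t ≤ f a := hmax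
  obtain ⟨b, hab, hb⟩ := mem_nhdsGT_iff_exists_Ioo_subset.1 (hpos.and hle)
  have hcont : ContinuousOn f (Ico a b) := by
    intro t ht
    rcases ht.1.eq_or_lt with rfl | hat
    · exact hf.mono Ico_subset_Ici_self
    · exact (differentiableAt_of_deriv_ne_zero
        (hb ⟨hat, ht.2⟩).1.ne').continuousAt.continuousWithinAt
  have hmono : StrictMonoOn f (Ico a b) :=
    strictMonoOn_of_deriv_pos (convex_Ico a b) hcont fun t ht =>
      (hb (by rwa [interior_Ico] at ht)).1
  obtain ⟨t, hat, htb⟩ := exists_between (mem_Ioi.1 hab)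
  exact (hmono (left_mem_Ico.2 hab) ⟨hat.le, htb⟩ hat).not_ge (hb ⟨hat, htb⟩).2

theorem deriv_mul_deriv_nonpos_of_isLocalMax (hf : ContinuousAt f a) (hc : ∀ᶠ t in 𝓝 a, 0 ≤ c t)
    (hmax : IsLocalMax f a) : deriv (fun t => c t * deriv f t) a ≤ 0 := by
  by_contra! hlt
  have hsign := eventually_nhdsWithin_sign_eq_of_deriv_pos hlt (by simp [hmax.deriv_eq_zero])
  have hpos : ∀ᶠ t in 𝓝[>] a, 0 < deriv f t := by
    filter_upwards [nhdsWithin_le_nhds hsign, nhdsWithin_le_nhds hc, self_mem_nhdsWithin]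
      with t hsign_t hct hat
    rw [sign_pos (sub_pos.2 hat), sign_eq_one_iff] at hsign_t
    exact pos_of_mul_pos_right hsign_t hct
  exact not_isLocalMaxOn_Ioi_of_deriv_pos hf.continuousWithinAt hpos (hmax.on _)

end Line

section Gradient

variable {E : Type*} [NormedAddCommGroup E] [InnerProductSpace ℝ E] [CompleteSpace E]
  {u c : E → ℝ} {p : E}

theorem gradient_fun_neg (u : E → ℝ) (x : E) : gradient (fun y => -u y) x = -gradient u x := by
  simp [gradient, fderiv_fun_neg]

theorem contDiffOn_gradient_of_isOpen {s : Set E} {k m : WithTop ℕ∞} (hs : IsOpen s)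
    (hu : ContDiffOn ℝ m u s) (hkm : k + 1 ≤ m) : ContDiffOn ℝ k (gradient u) s :=
  (InnerProductSpace.toDual ℝ E).symm.contDiff.comp_contDiffOn (hu.fderiv_of_isOpen hs hkm)

theorem hasDerivAt_comp_add_smul {x v : E} {t : ℝ} (hu : DifferentiableAt ℝ u (x + t • v)) :
    HasDerivAt (fun s : ℝ => u (x + s • v)) (inner ℝ (gradient u (x + t • v)) v) t := by
  have hline : HasDerivAt (fun s : ℝ => x + s • v) v t := by
    simpa using ((hasDerivAt_id t).smul_const v).const_add x
  simpa only [Function.comp_def, InnerProductSpace.toDual_apply_apply] using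
    hu.hasGradientAt.hasFDerivAt.comp_hasDerivAt t hline

theorem inner_fderiv_smul_gradient_nonpos_of_isLocalMax
    (hu : ∀ᶠ x in 𝓝 p, DifferentiableAt ℝ u x) (hc : ∀ᶠ x in 𝓝 p, 0 ≤ c x)
    (hF : DifferentiableAt ℝ (fun x => c x • gradient u x) p) (hmax : IsLocalMax u p) (v : E) :
    inner ℝ (fderiv ℝ (fun x => c x • gradient u x) p v) v ≤ 0 := by
  have hline : Tendsto (fun t : ℝ => p + t • v) (𝓝 0) (𝓝 p) :=
    Continuous.tendsto' (by fun_prop) _ _ (by simp)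
  have hflux : HasDerivAt (fun t : ℝ => inner ℝ (c (p + t • v) • gradient u (p + t • v)) v)
      (inner ℝ (fderiv ℝ (fun x => c x • gradient u x) p v) v) 0 := by
    simpa using (hF.hasFDerivAt.hasLineDerivAt v).inner ℝ (hasDerivAt_const (0 : ℝ) v)
  have hflux_eq : (fun t : ℝ => inner ℝ (c (p + t • v) • gradient u (p + t • v)) v) =ᶠ[𝓝 0]
      fun t => c (p + t • v) * deriv (fun s : ℝ => u (p + s • v)) t := by
    filter_upwards [hline.eventually hu] with t ht
    rw [(hasDerivAt_comp_add_smul ht).deriv, real_inner_smul_left]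
  have hcont : ContinuousAt (fun t : ℝ => u (p + t • v)) 0 :=
    (hasDerivAt_comp_add_smul (by simpa using hu.self_of_nhds)).continuousAt
  have hmax_line : IsLocalMax (fun t : ℝ => u (p + t • v)) 0 := by
    simpa [IsLocalMax, IsMaxFilter] using hline.eventually hmax
  rw [← hflux.deriv, hflux_eq.deriv_eq]
  exact deriv_mul_deriv_nonpos_of_isLocalMax hcont (hline.eventually hc) hmax_line

theorem inner_fderiv_smul_gradient_nonneg_of_isLocalMin
    (hu : ∀ᶠ x in 𝓝 p, DifferentiableAt ℝ u x) (hc : ∀ᶠ x in 𝓝 p, 0 ≤ c x)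
    (hF : DifferentiableAt ℝ (fun x => c x • gradient u x) p) (hmin : IsLocalMin u p) (v : E) :
    0 ≤ inner ℝ (fderiv ℝ (fun x => c x • gradient u x) p v) v := by
  have hflux_neg : (fun x => c x • gradient (fun y => -u y) x) =
      fun x => -(c x • gradient u x) := by
    simp only [gradient_fun_neg, smul_neg]
  have h := inner_fderiv_smul_gradient_nonpos_of_isLocalMax (hu.mono fun _ hx => hx.fun_neg) hc
    (hflux_neg ▸ hF.fun_neg) hmin.neg v
  simpa [hflux_neg, fderiv_fun_neg] using h

end Gradient

section Divergence

variable {n : ℕ} {Ω : Set (EuclideanSpace ℝ (Fin n))} {u c : EuclideanSpace ℝ (Fin n) → ℝ}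
  {F : EuclideanSpace ℝ (Fin n) → EuclideanSpace ℝ (Fin n)} {p : EuclideanSpace ℝ (Fin n)} {a : ℝ}

theorem diverg_eq_sum_inner (F : EuclideanSpace ℝ (Fin n) → EuclideanSpace ℝ (Fin n))
    (x : EuclideanSpace ℝ (Fin n)) :
    diverg F x = ∑ i, inner ℝ (fderiv ℝ F x (EuclideanSpace.single i 1))
      (EuclideanSpace.single i 1) := by
  simp [diverg, EuclideanSpace.inner_single_right]

theorem continuousOn_diverg_of_isOpen (hΩ : IsOpen Ω) (hF : ContDiffOn ℝ 1 F Ω) :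
    ContinuousOn (diverg F) Ω :=
  continuousOn_finsetSum _ fun i _ => (EuclideanSpace.proj (𝕜 := ℝ) i).continuous.comp_continuousOn
    ((hF.continuousOn_fderiv_of_isOpen hΩ le_rfl).clm_apply continuousOn_const)

theorem diverg_smul_gradient_nonpos_of_isLocalMax (hu : ∀ᶠ x in 𝓝 p, DifferentiableAt ℝ u x)
    (hc : ∀ᶠ x in 𝓝 p, 0 ≤ c x) (hF : DifferentiableAt ℝ (fun x => c x • gradient u x) p)
    (hmax : IsLocalMax u p) : diverg (fun x => c x • gradient u x) p ≤ 0 := by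
  rw [diverg_eq_sum_inner]
  exact Finset.sum_nonpos fun _ _ =>
    inner_fderiv_smul_gradient_nonpos_of_isLocalMax hu hc hF hmax _

theorem diverg_smul_gradient_nonneg_of_isLocalMin (hu : ∀ᶠ x in 𝓝 p, DifferentiableAt ℝ u x)
    (hc : ∀ᶠ x in 𝓝 p, 0 ≤ c x) (hF : DifferentiableAt ℝ (fun x => c x • gradient u x) p)
    (hmin : IsLocalMin u p) : 0 ≤ diverg (fun x => c x • gradient u x) p := by
  rw [diverg_eq_sum_inner]
  exact Finset.sum_nonneg fun _ _ =>
    inner_fderiv_smul_gradient_nonneg_of_isLocalMin hu hc hF hmin _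

theorem forall_ge_or_forall_le_of_diverg_smul_gradient_ne_zero (hΩo : IsOpen Ω)
    (hΩb : Bornology.IsBounded Ω) (hΩc : IsPreconnected Ω) (hu : DifferentiableOn ℝ u Ω)
    (hucl : ContinuousOn u (closure Ω)) (hc : ∀ x ∈ Ω, 0 ≤ c x)
    (hF : ContDiffOn ℝ 1 (fun x => c x • gradient u x) Ω) (hbd : ∀ x ∈ frontier Ω, u x = a)
    (hdiv : ∀ x ∈ Ω, diverg (fun x => c x • gradient u x) x ≠ 0) :
    (∀ x ∈ Ω, a ≤ u x) ∨ (∀ x ∈ Ω, u x ≤ a) := by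
  by_contra! hcon
  obtain ⟨⟨y, hy, hya⟩, ⟨z, hz, haz⟩⟩ := hcon
  have hbd' : ∀ x ∈ closure Ω \ Ω, u x = a := hΩo.frontier_eq ▸ hbd
  obtain ⟨p, hp, hmax⟩ := hΩb.isCompact_closure.exists_isLocalMax_mem_open subset_closure hucl
    (subset_closure hz) (fun x hx => (hbd' x hx).trans_lt haz) hΩo
  obtain ⟨q, hq, hmin⟩ := hΩb.isCompact_closure.exists_isLocalMin_mem_open subset_closure hucl
    (subset_closure hy) (fun x hx => hya.trans_eq (hbd' x hx).symm) hΩo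
  have hFd : DifferentiableOn ℝ (fun x => c x • gradient u x) Ω := hF.differentiableOn one_ne_zero
  have hdiv_p := diverg_smul_gradient_nonpos_of_isLocalMax
    (hu.eventually_differentiableAt (hΩo.mem_nhds hp)) (eventually_of_mem (hΩo.mem_nhds hp) hc)
    (hFd.differentiableAt (hΩo.mem_nhds hp)) hmax
  have hdiv_q := diverg_smul_gradient_nonneg_of_isLocalMin
    (hu.eventually_differentiableAt (hΩo.mem_nhds hq)) (eventually_of_mem (hΩo.mem_nhds hq) hc)
    (hFd.differentiableAt (hΩo.mem_nhds hq)) hmin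
  obtain ⟨x, hx, hx0⟩ := hΩc.intermediate_value hp hq (continuousOn_diverg_of_isOpen hΩo hF)
    ⟨hdiv_p, hdiv_q⟩
  exact hdiv x hx hx0

theorem contDiffOn_mcField_of_isOpen {k m : WithTop ℕ∞} (hΩ : IsOpen Ω) (hu : ContDiffOn ℝ m u Ω)
    (hkm : k + 1 ≤ m) (hsp : ∀ x ∈ Ω, ‖gradient u x‖ < 1) : ContDiffOn ℝ k (mcField u) Ω := by
  have hgrad : ContDiffOn ℝ k (gradient u) Ω := contDiffOn_gradient_of_isOpen hΩ hu hkm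
  have hpos : ∀ x ∈ Ω, 0 < 1 - ‖gradient u x‖ ^ 2 := fun x hx =>
    sub_pos.2 (pow_lt_one₀ (norm_nonneg _) (hsp x hx) two_ne_zero)
  have hsqrt : ContDiffOn ℝ k (fun x => Real.sqrt (1 - ‖gradient u x‖ ^ 2)) Ω :=
    (contDiffOn_const.sub (hgrad.norm_sq ℝ)).sqrt fun x hx => (hpos x hx).ne'
  exact (contDiffOn_const.div hsqrt fun x hx => (Real.sqrt_pos.2 (hpos x hx)).ne').smul hgrad

theorem stmt_12_general (hΩo : IsOpen Ω) (hΩb : Bornology.IsBounded Ω) (hΩc : IsPreconnected Ω)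
    (hu : ContDiffOn ℝ 2 u Ω) (hucl : ContinuousOn u (closure Ω))
    (hsp : ∀ x ∈ Ω, ‖gradient u x‖ < 1) (hbd : ∀ x ∈ frontier Ω, u x = a)
    (hH : ∀ x ∈ Ω, diverg (mcField u) x ≠ 0) :
    (∀ x ∈ Ω, a ≤ u x) ∨ (∀ x ∈ Ω, u x ≤ a) :=
  forall_ge_or_forall_le_of_diverg_smul_gradient_ne_zero hΩo hΩb hΩc
    (hu.differentiableOn two_ne_zero) hucl (fun _ _ => by positivity)
    (contDiffOn_mcField_of_isOpen hΩo hu one_add_one_eq_two.le hsp) hbd hH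

end Divergence

theorem stmt_12 (n : ℕ) (hn : 2 ≤ n) (Ω : Set (EuclideanSpace ℝ (Fin n)))
    (hΩo : IsOpen Ω) (hΩb : Bornology.IsBounded Ω) (hΩc : IsConnected Ω)
    (u : EuclideanSpace ℝ (Fin n) → ℝ)
    (U : Set (EuclideanSpace ℝ (Fin n))) (hUo : IsOpen U) (hUcl : closure Ω ⊆ U)
    (hu : ContDiffOn ℝ 2 u U)
    (hsp : ∀ x ∈ closure Ω, ‖gradient u x‖ < 1)
    (hbd : ∀ x ∈ frontier Ω, u x = 0)
    (hH : ∀ x ∈ Ω, diverg (mcField u) x ≠ 0) :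
    (∀ x ∈ Ω, 0 ≤ u x) ∨ (∀ x ∈ Ω, u x ≤ 0) :=
  stmt_12_general hΩo hΩb hΩc.isPreconnected (hu.mono (subset_closure.trans hUcl))
    (hu.continuousOn.mono hUcl) (fun x hx => hsp x (subset_closure hx)) hbd hH
end
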